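/- Let k ≥ 3 and let C' ⊆ {-1,1}^{2^k - 1} be a family of vectors such that the Hamming distance between any two distinct members of C' is even and not equal to 2^{k-1}. Then |C'| ≤ Σ_{i=0}^{2^{k-2} - 1} C(2^k - 1, i). -/

import Mathlib

open Finset

/-- The squarefree monomial `∏ i ∈ S, x i`, as a function on the cube. -/
def cubeMonomial {ι : Type*} (S : Finset ι) (x : ι → Bool) : ℚ :=
  ∏ i ∈ S, if x i then 1 else 0

/-- The functions on the cube that are represented by polynomials of degree at most `r`. -/
def cubePolynomials (ι : Type*) (r : ℕ) : Submodule ℚ ((ι → Bool) → ℚ) :=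
  Submodule.span ℚ (Set.image cubeMonomial {S : Finset ι | S.card ≤ r})

section cubePolynomials

variable {ι : Type*}

lemma cubePolynomials_mono {r s : ℕ} (h : r ≤ s) : cubePolynomials ι r ≤ cubePolynomials ι s :=
  Submodule.span_mono (Set.image_mono fun _ hS => le_trans hS h)

lemma one_mem_cubePolynomials (r : ℕ) : (1 : (ι → Bool) → ℚ) ∈ cubePolynomials ι r :=
  Submodule.subset_span ⟨∅, by simp, by ext x; simp [cubeMonomial]⟩

lemma coord_mul_mem_cubePolynomials [DecidableEq ι] {r : ℕ} (i : ι) {f : (ι → Bool) → ℚ}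
    (hf : f ∈ cubePolynomials ι r) :
    (fun x => if x i then 1 else 0) * f ∈ cubePolynomials ι (r + 1) := by
  induction hf using Submodule.span_induction with
  | mem f hf =>
    obtain ⟨S, hS, rfl⟩ := hf
    refine Submodule.subset_span ⟨insert i S, (card_insert_le i S).trans (Nat.succ_le_succ hS), ?_⟩
    ext x
    by_cases hi : i ∈ S
    · rw [insert_eq_of_mem hi]
      by_cases hx : x i
      · simp [hx]
      · simp [cubeMonomial, hx, prod_eq_zero hi]
    · simp [cubeMonomial, prod_insert hi]
  | zero => simp
  | add f g _ _ hf hg => rw [mul_add]; exact add_mem hf hg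
  | smul a f _ hf => rw [mul_smul_comm]; exact Submodule.smul_mem _ a hf

lemma ne_mul_mem_cubePolynomials [DecidableEq ι] {r : ℕ} (i : ι) (b : Bool)
    {f : (ι → Bool) → ℚ} (hf : f ∈ cubePolynomials ι r) :
    (fun x => if x i ≠ b then 1 else 0) * f ∈ cubePolynomials ι (r + 1) := by
  have h := coord_mul_mem_cubePolynomials i hf
  cases b
  · simpa using h
  · convert sub_mem (cubePolynomials_mono r.le_succ hf) h using 1
    ext x
    by_cases hx : x i <;> simp [hx]

variable [Fintype ι]

lemma hammingDist_mul_mem_cubePolynomials {r : ℕ} (y : ι → Bool)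
    {f : (ι → Bool) → ℚ} (hf : f ∈ cubePolynomials ι r) :
    (fun x => (hammingDist x y : ℚ)) * f ∈ cubePolynomials ι (r + 1) := by
  classical
  convert sum_mem (fun i (_ : i ∈ (univ : Finset ι)) => ne_mul_mem_cubePolynomials i (y i) hf)
    using 1
  ext x
  simp only [hammingDist, Finset.sum_apply, Pi.mul_apply, ← Finset.sum_mul, Finset.sum_boole]

lemma prod_hammingDist_mem_cubePolynomials (y : ι → Bool) (r : ℕ) :
    (fun x => ∏ t ∈ range r, ((hammingDist x y : ℚ) / 2 - 1 - t)) ∈ cubePolynomials ι r := by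
  induction r with
  | zero => simp only [range_zero, prod_empty]; exact one_mem_cubePolynomials 0
  | succ r ih =>
    convert add_mem
      (Submodule.smul_mem _ (1 / 2 : ℚ) (hammingDist_mul_mem_cubePolynomials y ih))
      (Submodule.smul_mem _ (-1 - r : ℚ) (cubePolynomials_mono r.le_succ ih)) using 1
    ext x
    simp [prod_range_succ]
    ring

lemma finrank_cubePolynomials_le (r : ℕ) :
    Module.finrank ℚ (cubePolynomials ι r) ≤
      ∑ i ∈ range (r + 1), (Fintype.card ι).choose i := by
  classical
  have hset : (Set.image cubeMonomial {S : Finset ι | S.card ≤ r}) =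
      (((range (r + 1)).biUnion fun i => powersetCard i univ).image cubeMonomial :
        Finset ((ι → Bool) → ℚ)) := by
    ext f
    simp
  rw [cubePolynomials, hset]
  refine (finrank_span_finset_le_card _).trans (card_image_le.trans (card_biUnion_le.trans ?_))
  simp

end cubePolynomials

/-- An integer matrix that reduces to the identity modulo 2 has rationally independent rows. -/
lemma linearIndependent_of_odd_diagonal {α : Type*} [Fintype α] [DecidableEq α]
    (M : Matrix α α ℤ) (hdiag : ∀ a, Odd (M a a)) (hoff : ∀ a b, a ≠ b → Even (M a b)) :
    LinearIndependent ℚ (M.map (Int.cast : ℤ → ℚ)).row := by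
  have hmod : M.map (Int.castRingHom (ZMod 2)) = 1 := by
    ext a b
    by_cases h : a = b
    · subst h
      simpa using (ZMod.intCast_eq_one_iff_odd).2 (hdiag a)
    · simpa [h] using (ZMod.intCast_eq_zero_iff_even).2 (hoff a b h)
  have hdet : M.det ≠ 0 := by
    intro h
    have := (Int.castRingHom (ZMod 2)).map_det M
    rw [RingHom.mapMatrix_apply, hmod, h] at this
    simp at this
  rw [Matrix.linearIndependent_rows_iff_isUnit, Matrix.isUnit_iff_isUnit_det, isUnit_iff_ne_zero]
  have := (Int.castRingHom ℚ).map_det M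
  rw [RingHom.mapMatrix_apply] at this
  change (M.map (Int.castRingHom ℚ)).det ≠ 0
  rw [← this]
  simpa using hdet

lemma even_choose_of_not_dvd {a e : ℕ} (h : ¬ 2 ^ a ∣ e + 1) : Even (e.choose (2 ^ a - 1)) := by
  by_contra hodd
  rw [Nat.not_even_iff_odd] at hodd
  have key := Nat.add_one_mul_choose_eq e (2 ^ a - 1)
  rw [Nat.sub_add_cancel Nat.one_le_two_pow] at key
  exact h ((Nat.Coprime.pow_left a hodd.coprime_two_left).dvd_of_dvd_mul_right
    (Dvd.intro_left _ key.symm))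

/-- The binomial coefficient `(e - 1).choose r`, extended to `e = 0` by `(-1) ^ r`. -/
def predChoose (e r : ℕ) : ℤ := if e = 0 then (-1) ^ r else (e - 1).choose r

lemma prod_eq_factorial_mul_predChoose (e r : ℕ) :
    ∏ t ∈ range r, ((e : ℚ) - 1 - t) = r.factorial * predChoose e r := by
  rcases e with _ | e
  · induction r with
    | zero => simp [predChoose]
    | succ r ih =>
      rw [prod_range_succ, ih]
      simp [predChoose, Nat.factorial_succ, pow_succ]
      ring
  · have h : (r.factorial : ℚ) * predChoose (e + 1) r = (e.descFactorial r : ℕ) := by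
      rw [Nat.descFactorial_eq_factorial_mul_choose]
      simp [predChoose]
    rw [h, ← descPochhammer_eval_eq_descFactorial ℚ, descPochhammer_eval_eq_prod_range]
    simp

theorem card_le_of_even_distances (k : ℕ) (hk : 3 ≤ k)
    (C' : Finset (Fin (2 ^ k - 1) → Bool))
    (hC' : ∀ x ∈ C', ∀ y ∈ C', x ≠ y →
      Even (hammingDist x y) ∧ hammingDist x y ≠ 2 ^ (k - 1)) :
    C'.card ≤ ∑ i ∈ Finset.range (2 ^ (k - 2)), Nat.choose (2 ^ k - 1) i := by
  obtain ⟨a, rfl⟩ : ∃ a, k = a + 2 := ⟨k - 2, by omega⟩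
  set r := 2 ^ a - 1 with hr
  have hq : 1 ≤ 2 ^ a := Nat.one_le_two_pow
  let M : Matrix C' C' ℤ := fun y x => predChoose (hammingDist x.1 y.1 / 2) r
  have hM : LinearIndependent ℚ (M.map (Int.cast : ℤ → ℚ)).row := by
    refine linearIndependent_of_odd_diagonal M (fun y => ?_) fun y x hyx => ?_
    · simpa [M, predChoose] using (Odd.pow (by decide : Odd (-1 : ℤ)))
    · have hne : x.1 ≠ y.1 := fun h => hyx (Subtype.ext h.symm)
      obtain ⟨⟨e, he⟩, hd⟩ := hC' x.1 x.2 y.1 y.2 hne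
      have hpos := hammingDist_pos.2 hne
      have hle : hammingDist x.1 y.1 ≤ 2 ^ (a + 2) - 1 := by
        simpa using hammingDist_le_card_fintype (x := x.1) (y := y.1)
      have h2 : hammingDist x.1 y.1 / 2 = e := by omega
      obtain ⟨e, rfl⟩ : ∃ j, e = j + 1 := ⟨e - 1, by omega⟩
      have hnd : ¬ 2 ^ a ∣ e + 1 := by
        rintro ⟨c, hc⟩
        have hp1 : 2 ^ (a + 2 - 1) = 2 ^ a * 2 := pow_succ 2 a
        have hp2 : 2 ^ (a + 2) = 2 ^ a * 4 := pow_add 2 a 2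
        have hc2 : c < 2 := by
          by_contra hc2
          have := Nat.mul_le_mul_left (2 ^ a) (not_lt.1 hc2)
          omega
        interval_cases c <;> omega
      change Even (predChoose (hammingDist x.1 y.1 / 2) r)
      rw [h2]
      simpa [predChoose] using even_choose_of_not_dvd hnd
  let F : C' → cubePolynomials (Fin (2 ^ (a + 2) - 1)) r := fun y =>
    ⟨_, Submodule.smul_mem _ ((r.factorial : ℚ)⁻¹)
      (prod_hammingDist_mem_cubePolynomials y.1 r)⟩
  let res : cubePolynomials (Fin (2 ^ (a + 2) - 1)) r →ₗ[ℚ] (C' → ℚ) :=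
    (LinearMap.funLeft ℚ ℚ (Subtype.val : C' → _)) ∘ₗ Submodule.subtype _
  have hF : res ∘ F = (M.map (Int.cast : ℤ → ℚ)).row := by
    ext y x
    have heven : Even (hammingDist x.1 y.1) := by
      by_cases h : x.1 = y.1
      · simp [h]
      · exact (hC' x.1 x.2 y.1 y.2 h).1
    have hcast : (hammingDist x.1 y.1 : ℚ) / 2 = (hammingDist x.1 y.1 / 2 : ℕ) := by
      rw [Nat.cast_div heven.two_dvd (by norm_num)]
      simp
    have hfac : (r.factorial : ℚ) ≠ 0 := by exact_mod_cast r.factorial_ne_zero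
    change (r.factorial : ℚ)⁻¹ * ∏ t ∈ range r, ((hammingDist x.1 y.1 : ℚ) / 2 - 1 - t) =
      (predChoose (hammingDist x.1 y.1 / 2) r : ℚ)
    rw [hcast, prod_eq_factorial_mul_predChoose, inv_mul_cancel_left₀ hfac]
  have hind : LinearIndependent ℚ F := LinearIndependent.of_comp res (hF ▸ hM)
  have hcard := hind.fintype_card_le_finrank.trans (finrank_cubePolynomials_le r)
  rw [hr, Nat.sub_add_cancel hq] at hcard
  simpa using hcard
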